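/- arXiv:1410.1201 — 7 statements merged into one kernel-verified Lean document; each statement's English description precedes it below -/
import Mathlib

section
/- Let N ≥ 2 be an integer, κ ∈ (0, 1/4], and α₊ = 1 + √(1−4κ). For every boundary point y ∈ ∂H = {x ∈ ℝ^N : x_N = 0}, the function u(x) = x_N^{α₊/2} |x − y|^{−(N−2+α₊)} satisfies −Δu(x) − κ x_N^{−2} u(x) = 0 for every x ∈ H \ {y}. (This is the half-space model of the Poisson kernel K_κ(·, y) of the Hardy operator, whose two-sided estimate is K_κ(x,y) ≍ d(x)^{α₊/2}|x−y|^{−(N−2+α₊)}.) -/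
open Real MeasureTheory

/-- The Euclidean Laplacian of `u : ℝ^N → ℝ`, written as the sum of the second
partial derivatives in the coordinate directions. -/
noncomputable def lap {N : ℕ} (u : EuclideanSpace ℝ (Fin N) → ℝ)
    (x : EuclideanSpace ℝ (Fin N)) : ℝ :=
  ∑ i : Fin N,
    fderiv ℝ (fun y => fderiv ℝ u y (EuclideanSpace.single i 1)) x (EuclideanSpace.single i 1)

lemma hp_deriv {N : ℕ} (n : Fin N) (y z : EuclideanSpace ℝ (Fin N)) (b c : ℝ)
    (hz : 0 < z n) (hs : 0 < ‖z - y‖ ^ 2) :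
    HasFDerivAt (fun x : EuclideanSpace ℝ (Fin N) => (x n) ^ b * (‖x - y‖ ^ 2) ^ c)
      ((z n) ^ b • ((c * (‖z - y‖ ^ 2) ^ (c - 1)) • ((2 : ℝ) • (innerSL ℝ (z - y))))
        + ((‖z - y‖ ^ 2) ^ c) • ((b * (z n) ^ (b - 1)) •
          (EuclideanSpace.proj n : EuclideanSpace ℝ (Fin N) →L[ℝ] ℝ))) z := by
  have h1 : HasFDerivAt (fun x : EuclideanSpace ℝ (Fin N) => x n)
      (EuclideanSpace.proj n : EuclideanSpace ℝ (Fin N) →L[ℝ] ℝ) z :=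
    (EuclideanSpace.proj n : EuclideanSpace ℝ (Fin N) →L[ℝ] ℝ).hasFDerivAt
  have h2 : HasFDerivAt (fun x : EuclideanSpace ℝ (Fin N) => ‖x - y‖ ^ 2)
      ((2 : ℝ) • (innerSL ℝ (z - y))) z := by
    have := ((hasFDerivAt_id (𝕜 := ℝ) z).sub_const y).norm_sq
    refine HasFDerivAt.congr_fderiv this ?_
    ext v
    simp [two_smul, two_mul]
  exact (h1.rpow_const (Or.inl hz.ne')).mul (h2.rpow_const (Or.inl hs.ne'))

lemma hp_apply {N : ℕ} (n i : Fin N) (y z : EuclideanSpace ℝ (Fin N)) (b c : ℝ)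
    (hz : 0 < z n) (hs : 0 < ‖z - y‖ ^ 2) :
    fderiv ℝ (fun x : EuclideanSpace ℝ (Fin N) => (x n) ^ b * (‖x - y‖ ^ 2) ^ c) z
      (EuclideanSpace.single i 1) =
    2 * c * ((z n) ^ b * (‖z - y‖ ^ 2) ^ (c - 1)) * (z i - y i) +
      b * (if n = i then 1 else 0) * ((z n) ^ (b - 1) * (‖z - y‖ ^ 2) ^ c) := by
  rw [(hp_deriv n y z b c hz hs).fderiv]
  simp [EuclideanSpace.inner_single_right, Pi.single_apply]
  split_ifs <;> ring

lemma hp_second {N : ℕ} (n i : Fin N) (y z : EuclideanSpace ℝ (Fin N)) (b c : ℝ)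
    (hz : 0 < z n) (hs : 0 < ‖z - y‖ ^ 2) :
    fderiv ℝ (fun w => fderiv ℝ (fun x : EuclideanSpace ℝ (Fin N) =>
      (x n) ^ b * (‖x - y‖ ^ 2) ^ c) w (EuclideanSpace.single i 1)) z
      (EuclideanSpace.single i 1) =
    4 * c * (c - 1) * ((z n) ^ b * (‖z - y‖ ^ 2) ^ (c - 1 - 1)) * (z i - y i) ^ 2
      + 2 * c * ((z n) ^ b * (‖z - y‖ ^ 2) ^ (c - 1))
      + (if n = i then
          4 * b * c * ((z n) ^ (b - 1) * (‖z - y‖ ^ 2) ^ (c - 1)) * (z i - y i)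
          + b * (b - 1) * ((z n) ^ (b - 1 - 1) * (‖z - y‖ ^ 2) ^ c) else 0) := by
  have hev : (fun w => fderiv ℝ (fun x : EuclideanSpace ℝ (Fin N) =>
      (x n) ^ b * (‖x - y‖ ^ 2) ^ c) w (EuclideanSpace.single i 1)) =ᶠ[nhds z]
      (fun w => 2 * c * ((w n) ^ b * (‖w - y‖ ^ 2) ^ (c - 1)) * (w i - y i) +
      b * (if n = i then 1 else 0) * ((w n) ^ (b - 1) * (‖w - y‖ ^ 2) ^ c)) := by
    have e1 : ∀ᶠ w : EuclideanSpace ℝ (Fin N) in nhds z, 0 < w n :=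
      (show Continuous fun w : EuclideanSpace ℝ (Fin N) => w n by fun_prop).continuousAt.eventually
        (lt_mem_nhds hz)
    have e2 : ∀ᶠ w : EuclideanSpace ℝ (Fin N) in nhds z, 0 < ‖w - y‖ ^ 2 :=
      (show Continuous fun w : EuclideanSpace ℝ (Fin N) => ‖w - y‖ ^ 2 by
        fun_prop).continuousAt.eventually (lt_mem_nhds hs)
    filter_upwards [e1, e2] with w h1 h2
    exact hp_apply n i y w b c h1 h2
  rw [hev.fderiv_eq]
  have hi : HasFDerivAt (fun x : EuclideanSpace ℝ (Fin N) => x i - y i)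
      (EuclideanSpace.proj i : EuclideanSpace ℝ (Fin N) →L[ℝ] ℝ) z :=
    (EuclideanSpace.proj i : EuclideanSpace ℝ (Fin N) →L[ℝ] ℝ).hasFDerivAt.sub_const _
  have A := hp_deriv n y z b (c - 1) hz hs
  have B := hp_deriv n y z (b - 1) c hz hs
  have C := ((A.const_mul (2 * c)).mul hi).add (B.const_mul (b * (if n = i then 1 else 0)))
  have a1 := hp_apply n i y z b (c - 1) hz hs
  have b1 := hp_apply n i y z (b - 1) c hz hs
  rw [A.fderiv] at a1
  rw [B.fderiv] at b1
  refine (congrArg (fun L => L (EuclideanSpace.single i (1 : ℝ))) C.fderiv).trans ?_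
  rw [add_apply, add_apply,
    smul_apply, smul_apply,
    smul_apply, smul_apply, a1, b1]
  have hp : (EuclideanSpace.proj i : EuclideanSpace ℝ (Fin N) →L[ℝ] ℝ)
      (EuclideanSpace.single i (1 : ℝ)) = 1 := by simp
  rw [hp]
  simp only [smul_eq_mul]
  split_ifs <;> ring

/-- for `κ ∈ (0,1/4]`, `α₊ = 1 + √(1-4κ)`, and any boundary point `y`
(`y_N = 0`), the model Poisson kernel `u(x) = x_N^{α₊/2} |x-y|^{-(N-2+α₊)}` satisfies
`-Δu - κ x_N⁻² u = 0` on `H \ {y}`, where `H = {x : x_N > 0}`. -/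
theorem hardy_poisson_kernel_solution (N : ℕ) (hN : 2 ≤ N) (κ : ℝ)
    (hκ0 : 0 < κ) (hκ4 : κ ≤ 1/4) (α : ℝ) (hα : α = 1 + Real.sqrt (1 - 4*κ)) :
    let n : Fin N := ⟨N - 1, by omega⟩
    ∀ y : EuclideanSpace ℝ (Fin N), y n = 0 →
    let u : EuclideanSpace ℝ (Fin N) → ℝ :=
      fun x => (x n) ^ (α/2) * ‖x - y‖ ^ (-((N : ℝ) - 2 + α))
    ∀ x : EuclideanSpace ℝ (Fin N), 0 < x n → x ≠ y →
      -lap u x - κ / (x n)^2 * u x = 0 := by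
  intro n y hy u x hx hxy
  have hs : 0 < ‖x - y‖ ^ 2 := by
    have := norm_pos_iff.mpr (sub_ne_zero.mpr hxy)
    positivity
  have hu : u = fun x => (x n) ^ (α/2) * (‖x - y‖ ^ 2) ^ (-((N : ℝ) - 2 + α) / 2) := by
    funext z
    simp only [u]
    rw [← Real.rpow_natCast, ← Real.rpow_mul (norm_nonneg _)]
    congr 2
    push_cast
    ring
  have hsum : ∑ i, (x i - y i) ^ 2 = ‖x - y‖ ^ 2 := by
    simp [EuclideanSpace.norm_sq_eq]
  have hk : α / 2 * (α / 2 - 1) = -κ := by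
    have := Real.sq_sqrt (show 0 ≤ 1 - 4 * κ by linarith)
    rw [hα]
    nlinarith
  rw [hu]
  unfold lap
  simp only [hp_second n _ y x _ _ hx hs]
  rw [Finset.sum_add_distrib, Finset.sum_add_distrib, ← Finset.mul_sum, hsum,
    Finset.sum_ite_eq]
  simp only [Finset.mem_univ, if_true, Finset.sum_const, Finset.card_univ, Fintype.card_fin,
    nsmul_eq_mul, hy, sub_zero]
  generalize hS : ‖x - y‖ ^ 2 = S at *
  generalize hT : x n = t at *
  have r1 : ∀ c : ℝ, S ^ (c - 1) = S ^ c / S := fun c => by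
    rw [Real.rpow_sub hs, Real.rpow_one]
  have r2 : ∀ c : ℝ, t ^ (c - 1) = t ^ c / t := fun c => by
    rw [Real.rpow_sub hx, Real.rpow_one]
  rw [hk]
  simp only [r1, r2]
  generalize t ^ (α / 2) = A
  generalize S ^ (-((N : ℝ) - 2 + α) / 2) = B
  field_simp
  ring
end

section
/- Let N ≥ 2 be an integer, κ ∈ (0, 1/4], α₊ = 1 + √(1−4κ), and let j be an index with 1 ≤ j ≤ N−1. Then the function u(x) = x_N^{α₊/2} x_j |x|^{−(N+α₊)} satisfies −Δu(x) − κ x_N^{−2} u(x) = 0 for every x ∈ H \ {0}, where H = {x ∈ ℝ^N : x_N > 0}. (This is the singular, homogeneous-of-degree −(N − 1 + α₊/2), companion of the second spherical eigenfunctions ρ_{κ,j}(σ) = (e_N·σ)^{α₊/2}(e_j·σ).) -/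
open Real MeasureTheory

lemma hs_sq {N : ℕ} (x : EuclideanSpace ℝ (Fin N)) :
    HasFDerivAt (fun y : EuclideanSpace ℝ (Fin N) => ‖y‖ ^ 2) (2 • innerSL ℝ x) x :=
  (hasStrictFDerivAt_norm_sq x).hasFDerivAt

lemma hs_coord {N : ℕ} (k : Fin N) (x : EuclideanSpace ℝ (Fin N)) :
    HasFDerivAt (fun y : EuclideanSpace ℝ (Fin N) => y k)
      (EuclideanSpace.proj k : EuclideanSpace ℝ (Fin N) →L[ℝ] ℝ) x :=
  (EuclideanSpace.proj k : EuclideanSpace ℝ (Fin N) →L[ℝ] ℝ).hasFDerivAt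

lemma hs_first {N : ℕ} (n j i : Fin N) (a p : ℝ) (x : EuclideanSpace ℝ (Fin N))
    (hx : 0 < x n) (hx0 : ‖x‖ ^ 2 ≠ 0) (u : EuclideanSpace ℝ (Fin N) → ℝ)
    (hu : u = fun y => (y n) ^ a * y j * (‖y‖ ^ 2) ^ p) :
    fderiv ℝ u x (EuclideanSpace.single i 1) =
      (if n = i then 1 else 0) * a * ((x n) ^ (a-1) * x j * (‖x‖ ^ 2) ^ p)
      + (if j = i then 1 else 0) * ((x n) ^ a * (‖x‖ ^ 2) ^ p)
      + 2 * p * ((x n) ^ a * x j * (‖x‖ ^ 2) ^ (p-1) * x i) := by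
  have h := (((hs_coord n x).rpow_const (p := a) (Or.inl hx.ne')).mul (hs_coord j x)).mul
    ((hs_sq x).rpow_const (p := p) (Or.inl hx0))
  subst hu
  refine (congrArg (fun L : EuclideanSpace ℝ (Fin N) →L[ℝ] ℝ =>
    L (EuclideanSpace.single i 1)) h.fderiv).trans ?_
  simp [EuclideanSpace.inner_single_right]
  split_ifs <;> ring

lemma hs_second {N : ℕ} (n j i : Fin N) (a p A B : ℝ) (x : EuclideanSpace ℝ (Fin N))
    (hx : 0 < x n) (hx0 : ‖x‖ ^ 2 ≠ 0) (hA : A = if n = i then 1 else 0)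
    (hB : B = if j = i then 1 else 0) :
    fderiv ℝ (fun x : EuclideanSpace ℝ (Fin N) => A * a * ((x n) ^ (a-1) * x j * (‖x‖ ^ 2) ^ p)
      + B * ((x n) ^ a * (‖x‖ ^ 2) ^ p)
      + 2 * p * ((x n) ^ a * x j * (‖x‖ ^ 2) ^ (p-1) * x i)) x (EuclideanSpace.single i 1) =
    A * A * (a * (a-1) * ((x n) ^ (a-1-1) * x j * (‖x‖ ^ 2) ^ p))
    + 2 * A * B * a * ((x n) ^ (a-1) * (‖x‖ ^ 2) ^ p)
    + A * (4 * a * p * ((x n) ^ (a-1) * x j * (‖x‖ ^ 2) ^ (p-1) * x i))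
    + B * (4 * p * ((x n) ^ a * (‖x‖ ^ 2) ^ (p-1) * x i))
    + 4 * p * (p-1) * ((x n) ^ a * x j * (‖x‖ ^ 2) ^ (p-1-1)) * (x i)^2
    + 2 * p * ((x n) ^ a * x j * (‖x‖ ^ 2) ^ (p-1)) := by
  have ra := fun a : ℝ => (hs_coord n x).rpow_const (p := a) (Or.inl hx.ne')
  have rs := fun p : ℝ => (hs_sq x).rpow_const (p := p) (Or.inl hx0)
  have h := ((((((ra (a-1)).mul (hs_coord j x)).mul (rs p)).const_mul (A * a)).add
    (((ra a).mul (rs p)).const_mul B)).add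
    (((((ra a).mul (hs_coord j x)).mul (rs (p-1))).mul (hs_coord i x)).const_mul (2*p)))
  have e := h.fderiv
  refine (congrArg (fun L : EuclideanSpace ℝ (Fin N) →L[ℝ] ℝ =>
    L (EuclideanSpace.single i 1)) e).trans ?_
  simp [EuclideanSpace.inner_single_right, ← hA, ← hB]
  ring

/-- for `κ ∈ (0,1/4]`, `α₊ = 1 + √(1-4κ)`, and a tangential index `j`
(`j < N-1`), the singular companion `u(x) = x_N^{α₊/2} x_j |x|^{-(N+α₊)}` satisfies
`-Δu - κ x_N⁻² u = 0` on `H \ {0}`, where `H = {x : x_N > 0}`. -/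
theorem hardy_second_eigen_singular_solution (N : ℕ) (hN : 2 ≤ N) (κ : ℝ)
    (hκ0 : 0 < κ) (hκ4 : κ ≤ 1/4) (α : ℝ) (hα : α = 1 + Real.sqrt (1 - 4*κ))
    (j : Fin N) (hj : (j : ℕ) < N - 1) :
    let n : Fin N := ⟨N - 1, by omega⟩
    let u : EuclideanSpace ℝ (Fin N) → ℝ :=
      fun x => (x n) ^ (α/2) * x j * ‖x‖ ^ (-((N : ℝ) + α))
    ∀ x : EuclideanSpace ℝ (Fin N), 0 < x n → x ≠ 0 →
      -lap u x - κ / (x n)^2 * u x = 0 := by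
  intro n u x hx hx0
  have hnj : n ≠ j := by
    intro h
    have := congrArg Fin.val h
    simp only [n] at this
    omega
  have hu : u = fun y => (y n) ^ (α/2) * y j * (‖y‖ ^ 2) ^ (-((N : ℝ) + α)/2) := by
    funext y
    simp only [u]
    congr 1
    rw [← Real.rpow_natCast, ← Real.rpow_mul (norm_nonneg y)]
    congr 1
    push_cast
    ring
  have hs : 0 < ‖x‖ ^ 2 := by positivity
  have hopen : ∀ᶠ y in nhds x, 0 < y n := by
    have : Continuous fun y : EuclideanSpace ℝ (Fin N) => y n := by fun_prop
    exact this.continuousAt.eventually (lt_mem_nhds hx)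
  have hopen2 : ∀ᶠ y in nhds x, ‖y‖ ^ 2 ≠ 0 := by
    have : Continuous fun y : EuclideanSpace ℝ (Fin N) => ‖y‖ ^ 2 := by fun_prop
    exact this.continuousAt.eventually_ne hs.ne'
  have hterm := fun i : Fin N => (congrArg (fun L : EuclideanSpace ℝ (Fin N) →L[ℝ] ℝ =>
    L (EuclideanSpace.single i 1)) (Filter.EventuallyEq.fderiv_eq (𝕜 := ℝ) (f₁ :=
      fun y => fderiv ℝ u y (EuclideanSpace.single i 1)) (x := x)
      ((hopen.and hopen2).mono fun y hy =>
        hs_first n j i (α/2) (-((N : ℝ) + α)/2) y hy.1 hy.2 u hu))).trans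
    (hs_second n j i (α/2) (-((N : ℝ) + α)/2) _ _ x hx hs.ne' rfl rfl)
  have hsum : ∑ i : Fin N, (x i)^2 = ‖x‖^2 := (EuclideanSpace.real_norm_sq_eq x).symm
  have hsq : Real.sqrt (1 - 4*κ) ^ 2 = 1 - 4*κ := Real.sq_sqrt (by linarith)
  have hκ : κ = -(α/2 * (α/2 - 1)) := by
    have : Real.sqrt (1 - 4*κ) = α - 1 := by linarith
    rw [this] at hsq
    linarith
  unfold lap
  simp only [hterm]
  simp only [Finset.sum_add_distrib, ← Finset.mul_sum, hsum]
  simp [hnj, hnj.symm]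
  rw [hu]
  simp only
  generalize hp : -((N : ℝ) + α)/2 = p
  have hp' : (N : ℝ) = -2*p - α := by linarith
  rw [hp', hκ]
  simp only [Real.rpow_sub_one hx.ne', Real.rpow_sub_one hs.ne']
  have := hx.ne'
  have := hs.ne'
  field_simp
  ring
end

section
/- Let N ≥ 2 be an integer, κ ∈ (0, 1/4], and α₊ = 1 + √(1−4κ). The function ρ(θ) = (cos θ)^{α₊/2} satisfies, for every θ ∈ (0, π/2), the ordinary differential equation −ρ''(θ) − (N−2)(cos θ/ sin θ) ρ'(θ) − κ (cos θ)^{−2} ρ(θ) = μ_{κ,1} ρ(θ), where μ_{κ,1} = (α₊/2)(N + α₊/2 − 2). (This is the zonal form of the statement that ρ_κ(σ) = (e_N·σ)^{α₊/2} is the first eigenfunction of the spherical Hardy operator on the upper half-sphere with eigenvalue μ_{κ,1}.) -/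
open Real

/-- for `κ ∈ (0,1/4]` and `α₊ = 1 + √(1-4κ)`, the zonal function
`ρ(θ) = (cos θ)^{α₊/2}` satisfies on `(0, π/2)` the ODE
`-ρ'' - (N-2)(cos θ/sin θ) ρ' - κ (cos θ)⁻² ρ = μ_{κ,1} ρ`, with
`μ_{κ,1} = (α₊/2)(N + α₊/2 - 2)`: it is the first eigenfunction of the spherical Hardy
operator on the upper half-sphere. -/
theorem spherical_hardy_first_eigenfunction (N : ℕ) (hN : 2 ≤ N) (κ : ℝ)
    (hκ0 : 0 < κ) (hκ4 : κ ≤ 1/4) (α : ℝ) (hα : α = 1 + Real.sqrt (1 - 4*κ)) :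
    let ρ : ℝ → ℝ := fun θ => (Real.cos θ) ^ (α/2)
    let μ : ℝ := (α/2) * ((N : ℝ) + α/2 - 2)
    ∀ θ ∈ Set.Ioo 0 (π/2),
      -(deriv (deriv ρ) θ) - ((N : ℝ) - 2) * (Real.cos θ / Real.sin θ) * deriv ρ θ
        - κ / (Real.cos θ)^2 * ρ θ = μ * ρ θ := by
  intro ρ μ θ hθ
  have hcos : ∀ x ∈ Set.Ioo (0:ℝ) (π/2), 0 < Real.cos x := fun x hx =>
    Real.cos_pos_of_mem_Ioo ⟨by linarith [hx.1, Real.pi_pos], hx.2⟩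
  have h1 : ∀ x ∈ Set.Ioo (0:ℝ) (π/2),
      deriv ρ x = -Real.sin x * (α/2) * Real.cos x ^ (α/2 - 1) := fun x hx =>
    ((Real.hasDerivAt_cos x).rpow_const (p := α/2) (Or.inl (hcos x hx).ne')).deriv
  have hc := hcos θ hθ
  have hs : 0 < Real.sin θ := Real.sin_pos_of_pos_of_lt_pi hθ.1 (by linarith [hθ.2, Real.pi_pos])
  have he : deriv ρ =ᶠ[nhds θ] fun x => -Real.sin x * (α/2) * Real.cos x ^ (α/2 - 1) := by
    filter_upwards [isOpen_Ioo.mem_nhds hθ] with x hx using h1 x hx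
  have h2 := ((((Real.hasDerivAt_sin θ).neg).mul_const (α/2)).mul
    ((Real.hasDerivAt_cos θ).rpow_const (p := α/2 - 1) (Or.inl hc.ne'))).deriv
  have h3 : deriv (deriv ρ) θ = -Real.cos θ * (α/2) * Real.cos θ ^ (α/2 - 1)
      + -Real.sin θ * (α/2) * (-Real.sin θ * (α/2 - 1) * Real.cos θ ^ (α/2 - 1 - 1)) := by
    rw [he.deriv_eq]; exact h2
  have hsq : Real.sqrt (1 - 4*κ) ^ 2 = 1 - 4*κ := Real.sq_sqrt (by linarith)
  have hk : κ = -((α/2) * (α/2 - 1)) := by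
    rw [hα]; nlinarith [hsq]
  have hρ : ρ θ = Real.cos θ ^ (α/2) := rfl
  have hμ : μ = (α/2) * ((N : ℝ) + α/2 - 2) := rfl
  have hss : Real.sin θ ^ 2 = 1 - Real.cos θ ^ 2 := Real.sin_sq θ
  rw [h3, h1 θ hθ, hρ, hμ, Real.rpow_sub_one hc.ne' (α/2 - 1), Real.rpow_sub_one hc.ne' (α/2), hk]
  generalize Real.cos θ ^ (α/2) = P
  field_simp
  rw [hss]
  ring
end

section
/- Let N ≥ 2 be an integer, κ ∈ (0, 1/4], α₊ = 1 + √(1−4κ), and μ_{κ,1} = (α₊/2)(N + α₊/2 − 2). Then for every smooth function w with compact support in the open interval (0, π/2), ∫₀^{π/2} w'(θ)² (sin θ)^{N−2} dθ ≥ κ ∫₀^{π/2} w(θ)² (cos θ)^{−2} (sin θ)^{N−2} dθ + μ_{κ,1} ∫₀^{π/2} w(θ)² (sin θ)^{N−2} dθ. (This is the zonal Hardy–Poincaré inequality expressing that μ_{κ,1} is the bottom of the spectrum of the spherical Hardy operator on the upper half-sphere.) -/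
open Real MeasureTheory

lemma aux_integrable (w f : ℝ → ℝ) (hc : HasCompactSupport w)
    (hs : tsupport w ⊆ Set.Ioo 0 (π/2))
    (h0 : ∀ x, x ∉ tsupport w → f x = 0)
    (hf : ∀ x, Real.cos x ≠ 0 → ContinuousAt f x) :
    Integrable f := by
  have hsub : tsupport f ⊆ tsupport w := by
    apply closure_minimal _ (isClosed_tsupport w)
    intro x hx
    by_contra h
    exact hx (h0 x h)
  have hcont : Continuous f := by
    apply continuous_of_tsupport
    intro x hx
    have := hs (hsub hx)
    exact hf x (Real.cos_pos_of_mem_Ioo ⟨by linarith [this.1, Real.pi_pos], this.2⟩).ne'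
  exact hcont.integrable_of_hasCompactSupport (hc.of_isClosed_subset (isClosed_tsupport f) hsub)

/-- zonal Hardy–Poincaré inequality on the upper half-sphere: for
`κ ∈ (0,1/4]`, `α₊ = 1 + √(1-4κ)` and `μ_{κ,1} = (α₊/2)(N + α₊/2 - 2)`, every smooth
`w` compactly supported in `(0, π/2)` satisfies
`∫ w'² sin^{N-2} ≥ κ ∫ w² cos⁻² sin^{N-2} + μ_{κ,1} ∫ w² sin^{N-2}`. -/
theorem zonal_hardy_poincare (N : ℕ) (hN : 2 ≤ N) (κ : ℝ)
    (hκ0 : 0 < κ) (hκ4 : κ ≤ 1/4) (α : ℝ) (hα : α = 1 + Real.sqrt (1 - 4*κ)) :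
    let μ : ℝ := (α/2) * ((N : ℝ) + α/2 - 2)
    ∀ w : ℝ → ℝ, ContDiff ℝ (⊤ : ℕ∞) w → HasCompactSupport w →
      tsupport w ⊆ Set.Ioo 0 (π/2) →
      (∫ θ in Set.Ioo 0 (π/2), (deriv w θ)^2 * (Real.sin θ)^(N-2))
        ≥ κ * (∫ θ in Set.Ioo 0 (π/2), (w θ)^2 / (Real.cos θ)^2 * (Real.sin θ)^(N-2))
          + μ * (∫ θ in Set.Ioo 0 (π/2), (w θ)^2 * (Real.sin θ)^(N-2)) := by
  intro μ w hw hc hs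
  obtain ⟨n, rfl⟩ : ∃ n, N = n + 2 := ⟨N - 2, by omega⟩
  simp only [Nat.add_sub_cancel]
  set a := α / 2 with ha
  have hκ : κ = a * (1 - a) := by
    have := Real.sq_sqrt (show (0:ℝ) ≤ 1 - 4*κ by linarith)
    rw [ha, hα]; nlinarith
  have hμ : μ = a * (n + a) := by
    simp only [μ]; push_cast; ring
  have hwd : ∀ x, HasDerivAt w (deriv w x) x := fun x =>
    ((hw.differentiable (by simp)) x).hasDerivAt
  have hwc : Continuous w := hw.continuous
  have hdc : Continuous (deriv w) := hw.continuous_deriv (by simp)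
  have hw0 : ∀ x, x ∉ tsupport w → w x = 0 := fun x hx => image_eq_zero_of_notMem_tsupport hx
  have hd0 : ∀ x, x ∉ tsupport w → deriv w x = 0 := fun x hx => by
    by_contra h
    exact hx (support_deriv_subset h)
  have hcos : ∀ x ∈ Set.Ioo 0 (π/2), 0 < Real.cos x := fun x hx =>
    Real.cos_pos_of_mem_Ioo ⟨by linarith [hx.1, Real.pi_pos], hx.2⟩
  set A : ℝ → ℝ := fun θ => (deriv w θ)^2 * (Real.sin θ)^n with hA
  set B : ℝ → ℝ := fun θ => (w θ)^2 / (Real.cos θ)^2 * (Real.sin θ)^n with hB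
  set C : ℝ → ℝ := fun θ => (w θ)^2 * (Real.sin θ)^n with hC
  set G : ℝ → ℝ := fun θ => -a * (Real.tan θ * (Real.sin θ)^n * (w θ)^2) with hG
  set D : ℝ → ℝ := fun θ => -a * (2 * (Real.tan θ * (Real.sin θ)^n * w θ * deriv w θ)
    + n * C θ + B θ) with hD
  have iA : Integrable A := aux_integrable w A hc hs (fun x hx => by simp [hA, hd0 x hx])
    (fun x hx => by fun_prop)
  have iB : Integrable B := aux_integrable w B hc hs (fun x hx => by simp [hB, hw0 x hx])
    (fun x hx => by
      have : Real.cos x ^ 2 ≠ 0 := pow_ne_zero 2 hx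
      simp only [hB]
      fun_prop (disch := assumption))
  have iC : Integrable C := aux_integrable w C hc hs (fun x hx => by simp [hC, hw0 x hx])
    (fun x hx => by fun_prop)
  have iG : Integrable G := aux_integrable w G hc hs (fun x hx => by simp [hG, hw0 x hx])
    (fun x hx => by
      have := Real.continuousAt_tan.2 hx
      simp only [hG]
      fun_prop)
  have hD0 : ∀ x, x ∉ tsupport w → D x = 0 := fun x hx => by
    simp [hD, hB, hC, hw0 x hx]
  have iD : Integrable D := aux_integrable w D hc hs hD0
    (fun x hx => by
      have := Real.continuousAt_tan.2 hx
      have : Real.cos x ^ 2 ≠ 0 := pow_ne_zero 2 hx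
      simp only [hD, hB, hC]
      fun_prop (disch := assumption))
  have hder : ∀ x, HasDerivAt G (D x) x := by
    intro x
    by_cases hx : x ∈ tsupport w
    · have hcx := (hcos x (hs hx)).ne'
      have h1 := Real.hasDerivAt_tan hcx
      have h2 := (Real.hasDerivAt_sin x).pow n
      have h3 := (hwd x).pow 2
      have h4 := ((h1.mul h2).mul h3).const_mul (-a)
      refine h4.congr_deriv ?_
      simp only [hD, hB, hC, Pi.mul_apply, Pi.pow_apply, Real.tan_eq_sin_div_cos]
      rcases n with _ | m
      · simp; left; field_simp; ring
      · simp only [Nat.add_sub_cancel]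
        push_cast
        field_simp
        ring
    · rw [hD0 x hx]
      have : G =ᶠ[nhds x] fun _ => 0 := by
        filter_upwards [(isClosed_tsupport w).isOpen_compl.mem_nhds hx] with y hy
        simp [hG, hw0 y hy]
      exact (hasDerivAt_const x (0:ℝ)).congr_of_eventuallyEq this
  have hint : ∫ x, D x = 0 := integral_eq_zero_of_hasDerivAt_of_integrable hder iD iG
  have hintS : ∫ x in Set.Ioo 0 (π/2), D x = 0 := by
    rw [setIntegral_eq_integral_of_forall_compl_eq_zero, hint]
    intro x hx
    exact hD0 x (fun h => hx (hs h))
  have key : ∫ x in Set.Ioo 0 (π/2), (κ * B x + μ * C x + D x) ≤ ∫ x in Set.Ioo 0 (π/2), A x := by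
    apply setIntegral_mono_on _ iA.integrableOn measurableSet_Ioo
    · intro x hx
      have hcx := (hcos x hx).ne'
      have hsx : 0 ≤ Real.sin x ^ n :=
        pow_nonneg (Real.sin_nonneg_of_nonneg_of_le_pi hx.1.le (by linarith [hx.2, Real.pi_pos])) n
      have hsq : 0 ≤ Real.sin x ^ n * (deriv w x + a * Real.tan x * w x)^2 :=
        mul_nonneg hsx (sq_nonneg _)
      have ht : 1 / Real.cos x ^ 2 = 1 + Real.tan x ^ 2 := by
        rw [Real.tan_eq_sin_div_cos]; field_simp
        linarith [Real.sin_sq_add_cos_sq x]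
      have hBx : B x = w x ^ 2 * (1 + Real.tan x ^ 2) * Real.sin x ^ n := by
        rw [← ht]; simp only [hB]; ring
      have : A x - (κ * B x + μ * C x + D x)
          = Real.sin x ^ n * (deriv w x + a * Real.tan x * w x)^2 := by
        simp only [hD, hBx, hA, hC, hκ, hμ]; ring
      linarith
    · exact (((iB.const_mul κ).add (iC.const_mul μ)).add iD).integrableOn
  have iBC : Integrable (fun x => κ * B x + μ * C x) := (iB.const_mul κ).add (iC.const_mul μ)
  rw [integral_add iBC.integrableOn iD.integrableOn,
    integral_add (iB.const_mul κ).integrableOn (iC.const_mul μ).integrableOn,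
    integral_const_mul, integral_const_mul, hintS, add_zero] at key
  exact key
end

section
/- Let N ≥ 2 be an integer, κ ∈ (0, 1/4], α₊ = 1 + √(1−4κ), and q_c = (2N+α₊)/(2N−4+α₊). There exists a constant c = c(N, κ) > 0 such that for every boundary point y ∈ ∂H = {x ∈ ℝ^N : x_N = 0} and every λ > 0, ∫_{E_λ(y)} x_N^{α₊/2} dx ≤ c λ^{−q_c}, where E_λ(y) = {x ∈ H : x_N^{α₊/2} |x − y|^{−(N−2+α₊)} > λ}. (This is the weak L^{q_c} estimate, with respect to the weight d^{α₊/2}, for the model Poisson kernel of the Hardy operator with a boundary pole.) -/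
open Real MeasureTheory

/-- weak `L^{q_c}` estimate for the model Poisson kernel of the Hardy
operator with respect to the weight `x_N^{α₊/2}`: there is `c = c(N,κ) > 0` such that for
every boundary pole `y` (`y_N = 0`) and every `λ > 0`,
`∫_{E_λ(y)} x_N^{α₊/2} dx ≤ c λ^{-q_c}` where
`E_λ(y) = {x ∈ H : x_N^{α₊/2}|x-y|^{-(N-2+α₊)} > λ}` and `q_c = (2N+α₊)/(2N-4+α₊)`. -/
theorem poisson_kernel_weak_type (N : ℕ) (hN : 2 ≤ N) (κ : ℝ)
    (hκ0 : 0 < κ) (hκ4 : κ ≤ 1/4) (α : ℝ) (hα : α = 1 + Real.sqrt (1 - 4*κ)) :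
    let n : Fin N := ⟨N - 1, by omega⟩
    let qc : ℝ := (2*(N : ℝ) + α) / (2*(N : ℝ) - 4 + α)
    ∃ c : ℝ, 0 < c ∧
      ∀ y : EuclideanSpace ℝ (Fin N), y n = 0 → ∀ lam : ℝ, 0 < lam →
        (∫⁻ x in {x : EuclideanSpace ℝ (Fin N) |
            0 < x n ∧ (x n) ^ (α/2) * ‖x - y‖ ^ (-((N : ℝ) - 2 + α)) > lam},
          ENNReal.ofReal ((x n) ^ (α/2)))
        ≤ ENNReal.ofReal (c * lam ^ (-qc)) := by
  intro n qc
  have hα1 : 1 ≤ α := by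
    rw [hα]; linarith [Real.sqrt_nonneg (1 - 4*κ)]
  have hN' : (2:ℝ) ≤ N := by exact_mod_cast hN
  have hs : 0 < (N:ℝ) - 2 + α/2 := by linarith
  have hvpos : 0 < volume (Metric.ball (0 : EuclideanSpace ℝ (Fin N)) 1) :=
    Metric.measure_ball_pos _ _ one_pos
  have hvfin : volume (Metric.ball (0 : EuclideanSpace ℝ (Fin N)) 1) ≠ ⊤ :=
    measure_ball_lt_top.ne
  refine ⟨(volume (Metric.ball (0 : EuclideanSpace ℝ (Fin N)) 1)).toReal,
    ENNReal.toReal_pos hvpos.ne' hvfin, ?_⟩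
  intro y hy lam hlam
  have hcoord : ∀ x : EuclideanSpace ℝ (Fin N), |x n| ≤ ‖x - y‖ := by
    intro x
    have h := PiLp.norm_apply_le (x - y) n
    simpa [hy] using h
  obtain ⟨R, hR⟩ : ∃ R : ℝ, R = lam ^ (-(1 / ((N:ℝ) - 2 + α/2))) := ⟨_, rfl⟩
  have hR0 : 0 < R := by rw [hR]; positivity
  have hRl : R ^ (-((N:ℝ) - 2 + α/2)) = lam := by
    rw [hR, ← Real.rpow_mul hlam.le]
    have : -(1 / ((N:ℝ) - 2 + α/2)) * -((N:ℝ) - 2 + α/2) = 1 := by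
      rw [neg_mul_neg, one_div, inv_mul_cancel₀ hs.ne']
    rw [this, Real.rpow_one]
  have hsub : {x : EuclideanSpace ℝ (Fin N) |
      0 < x n ∧ (x n) ^ (α/2) * ‖x - y‖ ^ (-((N : ℝ) - 2 + α)) > lam} ⊆ Metric.ball y R := by
    rintro x ⟨hx0, hx⟩
    rw [mem_ball_iff_norm]
    have h1 : x n ≤ ‖x - y‖ := (le_abs_self _).trans (hcoord x)
    have hr : 0 < ‖x - y‖ := hx0.trans_le h1
    by_contra! hcon
    have h2 : (x n) ^ (α/2) ≤ ‖x - y‖ ^ (α/2) :=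
      Real.rpow_le_rpow hx0.le h1 (by linarith)
    have h3 : (x n) ^ (α/2) * ‖x - y‖ ^ (-((N : ℝ) - 2 + α))
        ≤ ‖x - y‖ ^ (-((N:ℝ) - 2 + α/2)) := by
      calc _ ≤ ‖x - y‖ ^ (α/2) * ‖x - y‖ ^ (-((N : ℝ) - 2 + α)) := by gcongr
        _ = _ := by rw [← Real.rpow_add hr]; congr 1; ring
    have h4 : ‖x - y‖ ^ (-((N:ℝ) - 2 + α/2)) ≤ R ^ (-((N:ℝ) - 2 + α/2)) :=
      Real.rpow_le_rpow_of_nonpos hR0 hcon (by linarith)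
    linarith
  have hexp : R ^ (α/2) * R ^ N = lam ^ (-qc) := by
    rw [← Real.rpow_natCast R N, ← Real.rpow_add hR0, hR, ← Real.rpow_mul hlam.le]
    congr 1
    have h5 : 2*(N:ℝ) - 4 + α ≠ 0 := by linarith
    have h6 := hs.ne'
    have h7 : (N:ℝ) - 2 + α/2 = (2*(N:ℝ) - 4 + α)/2 := by ring
    simp only [qc]
    rw [h7]
    field_simp
    ring
  calc _ ≤ ∫⁻ x in Metric.ball y R, ENNReal.ofReal ((x n) ^ (α/2)) := lintegral_mono_set hsub
    _ ≤ ∫⁻ x in Metric.ball y R, ENNReal.ofReal (R ^ (α/2)) := by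
        refine setLIntegral_mono' measurableSet_ball ?_
        intro x hx
        rw [mem_ball_iff_norm] at hx
        apply ENNReal.ofReal_le_ofReal
        calc (x n) ^ (α/2) ≤ |(x n) ^ (α/2)| := le_abs_self _
          _ ≤ |x n| ^ (α/2) := Real.abs_rpow_le_abs_rpow _ _
          _ ≤ R ^ (α/2) := Real.rpow_le_rpow (abs_nonneg _) ((hcoord x).trans hx.le) (by linarith)
    _ = ENNReal.ofReal (R ^ (α/2)) * volume (Metric.ball y R) := by
        rw [setLIntegral_const]
    _ = _ := by
        rw [Measure.addHaar_ball_of_pos volume y hR0, finrank_euclideanSpace_fin, ← mul_assoc,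
          ← ENNReal.ofReal_mul (by positivity), hexp, mul_comm, ENNReal.ofReal_mul (by positivity),
          ENNReal.ofReal_toReal hvfin]
end

section
/- Let N ≥ 2 be an integer, κ ∈ (0, 1/4], α₊ = 1 + √(1−4κ), and q_c = (2N+α₊)/(2N−4+α₊). There exists a constant c = c(N, κ) > 0 with the following property: for every finite positive Borel measure μ on ℝ^{N−1}, if Kμ(x) = ∫_{ℝ^{N−1}} x_N^{α₊/2} |x − (y,0)|^{−(N−2+α₊)} dμ(y) for x ∈ H = {x ∈ ℝ^N : x_N > 0}, then for every λ > 0, ∫_{{x ∈ H : Kμ(x) > λ}} x_N^{α₊/2} dx ≤ c (μ(ℝ^{N−1})/λ)^{q_c}. (This is the half-space model of the distribution-function estimate for the Poisson operator of the Hardy operator acting on boundary measures.) -/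
open Real MeasureTheory

/-- radial truncated kernel -/
noncomputable def radK (N : ℕ) (R : ℝ) : ℝ → ℝ :=
  (Set.Iio R).indicator (fun r => r ^ (-((N : ℝ) - 2)))

lemma radK_meas (N : ℕ) (R : ℝ) : Measurable (radK N R) := by
  unfold radK
  exact Measurable.indicator (by fun_prop) measurableSet_Iio

lemma radK_smul (N : ℕ) (hN : 2 ≤ N) (R : ℝ) : ∀ y ∈ Set.Ioi (0:ℝ),
    y ^ (N - 1) • radK N R y = (Set.Iio R).indicator (fun y => y) y := by
  intro y hy
  have hy : 0 < y := hy
  unfold radK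
  by_cases h : y ∈ Set.Iio R
  · rw [Set.indicator_of_mem h, Set.indicator_of_mem h, smul_eq_mul, ← Real.rpow_natCast,
      ← Real.rpow_add hy, Nat.cast_sub (by omega)]
    have : ((N:ℝ) - (1:ℕ) + -((N:ℝ) - 2)) = 1 := by push_cast; ring
    rw [this, Real.rpow_one]
  · rw [Set.indicator_of_notMem h, Set.indicator_of_notMem h, smul_zero]

lemma radK_int (N : ℕ) (hN : 2 ≤ N) (R : ℝ) (hR : 0 < R) :
    ∫⁻ z : EuclideanSpace ℝ (Fin N), ENNReal.ofReal (radK N R ‖z‖) =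
      ENNReal.ofReal ((N * (volume : Measure (EuclideanSpace ℝ (Fin N))).real (Metric.ball 0 1) / 2)
        * R ^ 2) := by
  have : Nonempty (Fin N) := ⟨⟨0, by omega⟩⟩
  have hfr : Module.finrank ℝ (EuclideanSpace ℝ (Fin N)) = N := by simp
  have hi : Integrable (fun z : EuclideanSpace ℝ (Fin N) => radK N R ‖z‖) := by
    rw [integrable_fun_norm_addHaar, hfr, integrableOn_congr_fun (radK_smul N hN R) measurableSet_Ioi]
    unfold IntegrableOn
    rw [integrable_indicator_iff measurableSet_Iio]
    unfold IntegrableOn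
    rw [Measure.restrict_restrict measurableSet_Iio]
    have : Set.Iio R ∩ Set.Ioi 0 ⊆ Set.Icc 0 R := fun y hy => ⟨le_of_lt hy.2, le_of_lt hy.1⟩
    exact (continuous_id.integrableOn_Icc (a := 0) (b := R)).mono_set this
  rw [← ofReal_integral_eq_lintegral_ofReal hi]
  · rw [integral_fun_norm_addHaar, hfr, setIntegral_congr_fun measurableSet_Ioi (radK_smul N hN R),
      integral_indicator measurableSet_Iio, Measure.restrict_restrict measurableSet_Iio]
    have : Set.Iio R ∩ Set.Ioi 0 = Set.Ioo 0 R := by ext y; simp [and_comm]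
    rw [this, ← integral_Ioc_eq_integral_Ioo, ← intervalIntegral.integral_of_le hR.le, integral_id]
    congr 1
    simp
    ring
  · refine .of_forall fun z => ?_
    unfold radK
    exact Set.indicator_apply_nonneg fun _ => by positivity

/-- pointwise bound -/
lemma kern_bd (N : ℕ) (hN : 2 ≤ N) (a R t r : ℝ) (ha : 0 < a) (hR : 0 < R) (ht : 0 < t)
    (htr : t ≤ r) :
    ENNReal.ofReal (t ^ a) * ENNReal.ofReal (t ^ a * r ^ (-((N:ℝ) - 2 + 2 * a))) ≤
      ENNReal.ofReal (radK N R r) + ENNReal.ofReal (R ^ (-((N:ℝ) - 2 + a))) * ENNReal.ofReal (t ^ a) := by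
  have hr : 0 < r := ht.trans_le htr
  have hN' : (2:ℝ) ≤ N := by exact_mod_cast hN
  have h1 : t ^ a ≤ r ^ a := Real.rpow_le_rpow ht.le htr ha.le
  have h0 : 0 < t ^ a := by positivity
  have hs : (0:ℝ) ≤ r ^ (-((N:ℝ) - 2 + 2 * a)) := by positivity
  rw [← ENNReal.ofReal_mul h0.le]
  by_cases h : r < R
  · refine le_add_right (ENNReal.ofReal_le_ofReal ?_)
    rw [radK, Set.indicator_of_mem (show r ∈ Set.Iio R from h)]
    calc t ^ a * (t ^ a * r ^ (-((N:ℝ) - 2 + 2 * a)))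
        ≤ r ^ a * (r ^ a * r ^ (-((N:ℝ) - 2 + 2 * a))) := by gcongr
      _ = r ^ (-((N:ℝ) - 2)) := by
        rw [← Real.rpow_add hr, ← Real.rpow_add hr]; congr 1; ring
  · refine le_add_left ?_
    rw [← ENNReal.ofReal_mul (by positivity), mul_comm]
    refine ENNReal.ofReal_le_ofReal ?_
    gcongr
    push Not at h
    calc t ^ a * r ^ (-((N:ℝ) - 2 + 2 * a))
        ≤ r ^ a * r ^ (-((N:ℝ) - 2 + 2 * a)) := by gcongr
      _ = r ^ (-((N:ℝ) - 2 + a)) := by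
        rw [← Real.rpow_add hr]; congr 1; ring
      _ ≤ R ^ (-((N:ℝ) - 2 + a)) := Real.rpow_le_rpow_of_nonpos hR h (by linarith)

lemma absorb (A : ENNReal) (C M lam b : ℝ) (hA : A ≠ ⊤) (hC : 0 ≤ C) (hM : 0 < M) (hl : 0 < lam)
    (hb : 0 < b)
    (H : ∀ R : ℝ, 0 < R → ENNReal.ofReal lam * A ≤
      (ENNReal.ofReal (C * R ^ 2) + ENNReal.ofReal (R ^ (-b)) * A) * ENNReal.ofReal M) :
    A ≤ ENNReal.ofReal ((2 * C * 2 ^ (2 / b)) * (M / lam) ^ (1 + 2 / b)) := by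
  obtain ⟨A, rfl⟩ : ∃ A' : NNReal, A = A' := ⟨A.toNNReal, (ENNReal.coe_toNNReal hA).symm⟩
  have hA0 : (0:ℝ) ≤ A := A.2
  set R := (2 * M / lam) ^ (1 / b) with hRd
  have hq : 0 < 2 * M / lam := by positivity
  have hR : 0 < R := by positivity
  have h := H R hR
  rw [← ENNReal.ofReal_coe_nnreal, ← ENNReal.ofReal_mul hl.le, ← ENNReal.ofReal_mul (by positivity),
    ← ENNReal.ofReal_add (by positivity) (by positivity), ← ENNReal.ofReal_mul (by positivity),
    ENNReal.ofReal_le_ofReal_iff (by positivity)] at h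
  have e1 : R ^ (-b) = lam / (2 * M) := by
    rw [hRd, ← Real.rpow_mul hq.le]
    have : 1 / b * -b = -1 := by field_simp
    rw [this, Real.rpow_neg_one, inv_div]
  have e2 : R ^ 2 = 2 ^ (2 / b) * (M / lam) ^ (2 / b) := by
    rw [hRd, ← Real.rpow_natCast, ← Real.rpow_mul hq.le, ← Real.mul_rpow (by norm_num) (by positivity)]
    congr 1
    · ring
    · push_cast; ring
  rw [← ENNReal.ofReal_coe_nnreal]
  refine ENNReal.ofReal_le_ofReal ?_
  rw [Real.rpow_add (by positivity), Real.rpow_one]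
  have e3 : 2 * C * 2 ^ (2 / b) * (M / lam * (M / lam) ^ (2 / b)) = 2 * C * (M / lam) * R ^ 2 := by
    rw [e2]; ring
  rw [e3]
  have e4 : (C * R ^ 2 + R ^ (-b) * A) * M = C * R ^ 2 * M + lam * A / 2 := by
    rw [e1]; field_simp
  rw [e4] at h
  have : lam * A ≤ lam * (2 * C * (M / lam) * R ^ 2) := by
    have : lam * (2 * C * (M / lam) * R ^ 2) = 2 * (C * R ^ 2 * M) := by field_simp
    linarith
  exact le_of_mul_le_mul_left this hl

/-- distribution-function estimate for the model Poisson operator of the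
Hardy operator acting on boundary measures: there is `c = c(N,κ) > 0` such that for every
finite positive Borel measure `μ` on `ℝ^{N-1}` and every `λ > 0`, the weighted measure
(with weight `x_N^{α₊/2}`) of `{x ∈ H : Kμ(x) > λ}` is at most `c (μ(ℝ^{N-1})/λ)^{q_c}`,
where `Kμ(x) = ∫ x_N^{α₊/2}|x - (y,0)|^{-(N-2+α₊)} dμ(y)` and
`q_c = (2N+α₊)/(2N-4+α₊)`. -/
theorem poisson_operator_weak_type (N : ℕ) (hN : 2 ≤ N) (κ : ℝ)
    (hκ0 : 0 < κ) (hκ4 : κ ≤ 1/4) (α : ℝ) (hα : α = 1 + Real.sqrt (1 - 4*κ)) :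
    let n : Fin N := ⟨N - 1, by omega⟩
    let qc : ℝ := (2*(N : ℝ) + α) / (2*(N : ℝ) - 4 + α)
    -- the isometric identification `ℝ^{N-1} ∋ y ↦ (y, 0) ∈ ∂H ⊂ ℝ^N`
    let emb : EuclideanSpace ℝ (Fin (N-1)) → EuclideanSpace ℝ (Fin N) :=
      fun y => (EuclideanSpace.equiv (Fin N) ℝ).symm
        (fun i => if h : (i : ℕ) < N - 1 then y ⟨(i : ℕ), h⟩ else 0)
    ∃ c : ℝ, 0 < c ∧
      ∀ μ : Measure (EuclideanSpace ℝ (Fin (N-1))), IsFiniteMeasure μ →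
        let Kμ : EuclideanSpace ℝ (Fin N) → ℝ :=
          fun x => ∫ y, (x n) ^ (α/2) * ‖x - emb y‖ ^ (-((N : ℝ) - 2 + α)) ∂μ
        ∀ lam : ℝ, 0 < lam →
          (∫⁻ x in {x : EuclideanSpace ℝ (Fin N) | 0 < x n ∧ Kμ x > lam},
            ENNReal.ofReal ((x n) ^ (α/2)))
          ≤ ENNReal.ofReal (c * ((μ Set.univ).toReal / lam) ^ qc) := by
  intro n qc emb
  set C : ℝ := N * (volume : Measure (EuclideanSpace ℝ (Fin N))).real (Metric.ball 0 1) / 2 with hC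
  have hN' : (2:ℝ) ≤ N := by exact_mod_cast hN
  have hα1 : 1 ≤ α := by rw [hα]; linarith [Real.sqrt_nonneg (1 - 4*κ)]
  have hC0 : 0 < C := by
    have : 0 < (volume : Measure (EuclideanSpace ℝ (Fin N))).real (Metric.ball 0 1) :=
      ENNReal.toReal_pos (Metric.measure_ball_pos _ _ one_pos).ne' measure_ball_lt_top.ne
    positivity
  set b : ℝ := (N:ℝ) - 2 + α / 2 with hb
  have hb0 : 0 < b := by linarith
  have hqc : qc = 1 + 2 / b := by
    have : 2*(N : ℝ) - 4 + α = 2 * b := by rw [hb]; ring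
    simp only [qc]
    rw [this]
    field_simp
    rw [hb]; ring
  refine ⟨2 * C * 2 ^ (2 / b), by positivity, ?_⟩
  intro μ hμ Kμ lam hlam
  set M : ℝ := (μ Set.univ).toReal with hMd
  have hMof : ENNReal.ofReal M = μ Set.univ := ENNReal.ofReal_toReal (measure_ne_top _ _)
  have hembc : Continuous emb := by
    simp only [emb]
    refine (EuclideanSpace.equiv (Fin N) ℝ).symm.continuous.comp ?_
    refine continuous_pi fun i => ?_
    by_cases h : (i : ℕ) < N - 1
    · simp only [h, dite_true]; fun_prop
    · simp only [h, dite_false]; fun_prop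
  have hembn : ∀ y, emb y n = 0 := by
    intro y; simp [emb, n]
  have hcoord : Measurable (fun x : EuclideanSpace ℝ (Fin N) => x n) := by fun_prop
  have hker : Measurable (Function.uncurry fun (x : EuclideanSpace ℝ (Fin N)) (y : EuclideanSpace ℝ (Fin (N-1))) =>
      (x n) ^ (α/2) * ‖x - emb y‖ ^ (-((N : ℝ) - 2 + α))) := by
    have := hembc.measurable
    unfold Function.uncurry
    fun_prop
  have hKm : Measurable Kμ := (hker.stronglyMeasurable.integral_prod_right (ν := μ)).measurable
  have hEm : MeasurableSet {x : EuclideanSpace ℝ (Fin N) | 0 < x n ∧ Kμ x > lam} :=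
    (measurableSet_lt measurable_const hcoord).inter (measurableSet_lt measurable_const hKm)
  set E := {x : EuclideanSpace ℝ (Fin N) | 0 < x n ∧ Kμ x > lam} with hE
  by_cases hM : M = 0
  · have hμ0 : μ = 0 := by
      rw [← Measure.measure_univ_eq_zero, ← hMof, hM, ENNReal.ofReal_zero]
    have : E = ∅ := by
      rw [hE]
      ext x
      simp only [Kμ, hμ0, integral_zero_measure]
      simp [hlam.le]
    rw [this]; simp
  have hM0 : 0 < M := lt_of_le_of_ne ENNReal.toReal_nonneg (Ne.symm hM)
  have hcover : E = ⋃ k : ℕ, E ∩ Metric.ball 0 k := by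
    rw [← Set.inter_iUnion, Metric.iUnion_ball_nat, Set.inter_univ]
  rw [hcover, setLIntegral_iUnion_of_directed]
  swap
  · refine Monotone.directed_le fun i j hij => ?_
    exact Set.inter_subset_inter_right _ (Metric.ball_subset_ball (by exact_mod_cast hij))
  refine iSup_le fun k => ?_
  have hSm : MeasurableSet (E ∩ Metric.ball (0 : EuclideanSpace ℝ (Fin N)) k) := hEm.inter measurableSet_ball
  set S := E ∩ Metric.ball (0 : EuclideanSpace ℝ (Fin N)) k with hS
  rw [hqc]
  refine absorb _ C M lam b ?_ hC0.le hM0 hlam hb0 ?_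
  · refine ne_of_lt (lt_of_le_of_lt (setLIntegral_mono' (g := fun _ => ENNReal.ofReal ((k:ℝ) ^ (α/2))) hSm ?_) ?_)
    · intro x hx
      refine ENNReal.ofReal_le_ofReal ?_
      have h1 : 0 < x n := hx.1.1
      refine Real.rpow_le_rpow h1.le ?_ (by linarith)
      have h2 : ‖x‖ < k := by simpa using hx.2
      have h3 : ‖x n‖ ≤ ‖x‖ := PiLp.norm_apply_le x n
      exact (le_abs_self _).trans (h3.trans h2.le)
    · rw [setLIntegral_const]
      exact ENNReal.mul_lt_top ENNReal.ofReal_lt_top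
        ((measure_mono Set.inter_subset_right).trans_lt measure_ball_lt_top)
  · intro R hR
    have hw : Measurable fun x : EuclideanSpace ℝ (Fin N) => ENNReal.ofReal ((x n) ^ (α/2)) := by fun_prop
    calc ENNReal.ofReal lam * ∫⁻ x in S, ENNReal.ofReal ((x n) ^ (α/2))
        = ∫⁻ x in S, ENNReal.ofReal lam * ENNReal.ofReal ((x n) ^ (α/2)) :=
          (lintegral_const_mul _ hw).symm
      _ ≤ ∫⁻ x in S, ∫⁻ y, ENNReal.ofReal ((x n) ^ (α/2)) *
            ENNReal.ofReal ((x n) ^ (α/2) * ‖x - emb y‖ ^ (-((N : ℝ) - 2 + α))) ∂μ := by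
          refine setLIntegral_mono' hSm fun x hx => ?_
          have h1 : 0 < x n := hx.1.1
          have h2 : lam < Kμ x := hx.1.2
          rw [lintegral_const_mul' _ _ ENNReal.ofReal_ne_top, mul_comm]
          gcongr
          rw [← ofReal_integral_eq_lintegral_ofReal]
          · exact ENNReal.ofReal_le_ofReal h2.le
          · by_contra hni
            have : Kμ x = 0 := integral_undef hni
            linarith
          · exact .of_forall fun y => by positivity
      _ = ∫⁻ y, (∫⁻ x in S, ENNReal.ofReal ((x n) ^ (α/2)) *
            ENNReal.ofReal ((x n) ^ (α/2) * ‖x - emb y‖ ^ (-((N : ℝ) - 2 + α)))) ∂μ := by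
          refine lintegral_lintegral_swap (Measurable.aemeasurable ?_)
          exact (hw.comp measurable_fst).mul (ENNReal.measurable_ofReal.comp hker)
      _ ≤ ∫⁻ y, (ENNReal.ofReal (C * R ^ 2) + ENNReal.ofReal (R ^ (-b)) *
            ∫⁻ x in S, ENNReal.ofReal ((x n) ^ (α/2))) ∂μ := by
          refine lintegral_mono fun y => ?_
          have hrm : Measurable fun x : EuclideanSpace ℝ (Fin N) => ENNReal.ofReal (radK N R ‖x - emb y‖) :=
            ENNReal.measurable_ofReal.comp ((radK_meas N R).comp (by fun_prop))
          calc _ ≤ ∫⁻ x in S, (ENNReal.ofReal (radK N R ‖x - emb y‖) +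
                ENNReal.ofReal (R ^ (-b)) * ENNReal.ofReal ((x n) ^ (α/2))) := by
                refine setLIntegral_mono' hSm fun x hx => ?_
                have h1 : 0 < x n := hx.1.1
                have h3 : ‖(x - emb y) n‖ ≤ ‖x - emb y‖ := PiLp.norm_apply_le _ n
                rw [PiLp.sub_apply, hembn, sub_zero, Real.norm_of_nonneg h1.le] at h3
                have := kern_bd N hN (α/2) R (x n) ‖x - emb y‖ (by linarith) hR h1 h3
                rwa [show 2 * (α / 2) = α by ring] at this
            _ = (∫⁻ x in S, ENNReal.ofReal (radK N R ‖x - emb y‖)) +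
                ENNReal.ofReal (R ^ (-b)) * ∫⁻ x in S, ENNReal.ofReal ((x n) ^ (α/2)) := by
                rw [lintegral_add_left hrm, lintegral_const_mul _ hw]
            _ ≤ _ := by
                gcongr
                refine (setLIntegral_le_lintegral _ _).trans ?_
                rw [lintegral_sub_right_eq_self (fun z => ENNReal.ofReal (radK N R ‖z‖)) (emb y),
                  radK_int N hN R hR]
      _ = _ := by rw [lintegral_const, hMof]
end

section
/- Let N ≥ 2, κ ∈ (0, 1/4], α₊ = 1 + √(1−4κ), q ≥ q_c = (2N+α₊)/(2N−4+α₊), and ℓ_{N,q} = (2/(q−1))(2q/(q−1) − N). Suppose ω : (0, π/2) → ℝ is twice continuously differentiable and satisfies −ω'' − (N−2)(cos θ/sin θ) ω' − ℓ_{N,q} ω − κ (cos θ)^{−2} ω + |ω|^{q−1} ω = 0 on (0, π/2), with ∫₀^{π/2} (ω'(θ)² + ω(θ)² (cos θ)^{−2} + |ω(θ)|^{q+1}) (sin θ)^{N−2} dθ < ∞, and suppose there exists a sequence of smooth functions ω_n compactly supported in (0, π/2) such that ∫₀^{π/2} ((ω − ω_n)'² + (ω − ω_n)² (cos θ)^{−2})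 (sin θ)^{N−2} dθ → 0. Then ω ≡ 0. (This is the zonal form of the nonexistence of nontrivial finite-energy separable solutions in the supercritical range q ≥ q_c, i.e. part I of the classification of the set ℰ_κ.) -/
open Real MeasureTheory Filter

lemma aux_gamma (κ α : ℝ) (hκ0 : 0 < κ) (hκ4 : κ ≤ 1/4) (hα : α = 1 + Real.sqrt (1 - 4*κ)) :
    1/2 ≤ α/2 ∧ α/2 ≤ 1 ∧ (α/2) * (1 - α/2) = κ := by
  have h1 : Real.sqrt (1 - 4*κ) ^ 2 = 1 - 4*κ := Real.sq_sqrt (by linarith)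
  have h2 : 0 ≤ Real.sqrt (1 - 4*κ) := Real.sqrt_nonneg _
  subst hα
  refine ⟨by linarith, by nlinarith, by nlinarith⟩

lemma aux_ell (N : ℕ) (hN : 2 ≤ N) (g q ℓ : ℝ) (hg : 1/2 ≤ g)
    (hq : (2*(N : ℝ) + 2*g) / (2*(N : ℝ) - 4 + 2*g) ≤ q)
    (hℓ : ℓ = (2/(q-1)) * (2*q/(q-1) - (N : ℝ))) :
    1 < q ∧ ℓ ≤ g * (g + ((N:ℝ) - 2)) := by
  have hN' : (2:ℝ) ≤ N := by exact_mod_cast hN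
  have hd : 0 < 2*(N : ℝ) - 4 + 2*g := by linarith
  rw [div_le_iff₀ hd] at hq
  have hq1 : 1 < q := by
    by_contra h
    push Not at h
    nlinarith
  refine ⟨hq1, ?_⟩
  have hq0 : 0 < q - 1 := by linarith
  set s := 2/(q-1) with hs
  have hsq : s * (q-1) = 2 := by rw [hs]; field_simp
  have hs0 : 0 < s := by positivity
  have h2 : 2*q/(q-1) = s + 2 := by rw [hs]; field_simp; ring
  rw [h2] at hℓ
  have hsle : s ≤ g + ((N:ℝ) - 2) := by
    rw [hs, div_le_iff₀ hq0]; nlinarith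
  rw [hℓ]
  by_cases h : s + 2 - N ≤ 0
  · have : s * (s+2-N) ≤ 0 := mul_nonpos_of_nonneg_of_nonpos hs0.le h
    have : 0 ≤ g * (g + ((N:ℝ) - 2)) := mul_nonneg (by linarith) (by linarith)
    linarith
  · push Not at h
    have := mul_le_mul hsle (show s + 2 - N ≤ g by linarith) h.le (by linarith)
    linarith

lemma aux_sinpow (k : ℕ) (θ : ℝ) (h : 0 < sin θ) :
    HasDerivAt (fun t => sin t ^ k) (k * (cos θ / sin θ) * sin θ ^ k) θ := by
  have := (Real.hasDerivAt_sin θ).pow k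
  refine this.congr_deriv ?_
  cases k with
  | zero => simp
  | succ n => simp only [Nat.add_sub_cancel]; field_simp; ring

/-- non-integrability at the right end -/
lemma aux_right (E : ℝ → ℝ) (a b c : ℝ) (hab : a < b) (hc : 0 < c)
    (hE : IntegrableOn E (Set.Ioo a b)) (h : ∀ t ∈ Set.Ioo a b, c / (b - t) ≤ E t) : False := by
  have h1 : IntegrableOn (fun t => (t - b)⁻¹) (Set.Ioo a b) := by
    refine Integrable.mono' (hE.const_mul c⁻¹) (by fun_prop) ?_
    refine (ae_restrict_mem measurableSet_Ioo).mono fun t ht => ?_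
    have h2 := h t ht
    have h3 : 0 < b - t := by linarith [ht.2]
    rw [Real.norm_eq_abs, abs_inv, abs_of_neg (by linarith)]
    rw [inv_mul_eq_div, le_div_iff₀ hc]
    have : -(t - b) = b - t := by ring
    rw [this, inv_mul_eq_div]; exact h2
  have h2 : IntervalIntegrable (fun t => (t - b)⁻¹) volume a b := by
    rwa [intervalIntegrable_iff_integrableOn_Ioo_of_le hab.le]
  rw [intervalIntegrable_sub_inv_iff] at h2
  rcases h2 with h2 | h2
  · linarith
  · exact h2 (Set.right_mem_uIcc)

lemma aux_left (E : ℝ → ℝ) (b c : ℝ) (hab : 0 < b) (hc : 0 < c)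
    (hE : IntegrableOn E (Set.Ioo 0 b)) (h : ∀ t ∈ Set.Ioo 0 b, c / t ≤ E t) : False := by
  have h1 : IntegrableOn (fun t : ℝ => t⁻¹) (Set.Ioo 0 b) := by
    refine Integrable.mono' (hE.const_mul c⁻¹) (by fun_prop) ?_
    refine (ae_restrict_mem measurableSet_Ioo).mono fun t ht => ?_
    have h2 := h t ht
    have h3 : 0 < t := ht.1
    rw [Real.norm_eq_abs, abs_inv, abs_of_pos h3]
    rw [inv_mul_eq_div, le_div_iff₀ hc]
    rw [inv_mul_eq_div]; exact h2
  have h2 : IntervalIntegrable (fun t : ℝ => t⁻¹) volume 0 b := by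
    rwa [intervalIntegrable_iff_integrableOn_Ioo_of_le hab.le]
  rw [intervalIntegrable_inv_iff] at h2
  rcases h2 with h2 | h2
  · linarith
  · exact h2 (Set.left_mem_uIcc)

lemma aux_measurable (k : ℕ) (ω ω' : ℝ → ℝ) (b : ℝ) (hb : b ≤ π/2)
    (h1 : ContinuousOn ω (Set.Ioo 0 b)) (h2 : ContinuousOn ω' (Set.Ioo 0 b)) :
    ContinuousOn (fun θ => ((ω' θ)^2 + (ω θ)^2 / (Real.cos θ)^2) * (Real.sin θ)^k)
      (Set.Ioo 0 b) := by
  refine ((h2.pow 2).add ((h1.pow 2).div (by fun_prop) ?_)).mul (by fun_prop)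
  intro x hx
  have : 0 < cos x := cos_pos_of_mem_Ioo ⟨by linarith [hx.1, pi_pos], by linarith [hx.2]⟩
  positivity

/-- derivative of the monotone quantity -/
lemma aux_deriv (k : ℕ) (g κ ℓ q : ℝ) (hgκ : g * (1 - g) = κ) (ω ω' : ℝ → ℝ) (w2 θ : ℝ)
    (hθ : θ ∈ Set.Ioo 0 (π/2)) (h1 : HasDerivAt ω (ω' θ) θ) (h2 : HasDerivAt ω' w2 θ)
    (hO : -w2 - (k:ℝ) * (cos θ / sin θ) * ω' θ - ℓ * ω θ - κ / (cos θ)^2 * ω θ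
      + |ω θ| ^ (q-1) * ω θ = 0) :
    HasDerivAt (fun t => (ω t * ω' t + g * (sin t / cos t) * ω t ^ 2) * sin t ^ k)
      (((ω' θ + g * (sin θ / cos θ) * ω θ)^2 + (g * (g + k) - ℓ) * ω θ ^ 2
        + |ω θ| ^ (q-1) * ω θ ^ 2) * sin θ ^ k) θ := by
  have hc : 0 < cos θ := cos_pos_of_mem_Ioo ⟨by linarith [hθ.1, pi_pos], hθ.2⟩
  have hs : 0 < sin θ := sin_pos_of_pos_of_lt_pi hθ.1 (by linarith [hθ.2, pi_pos])
  have hw := aux_sinpow k θ hs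
  have ht := (Real.hasDerivAt_sin θ).div (Real.hasDerivAt_cos θ) hc.ne'
  have := ((h1.mul h2).add ((ht.const_mul g).mul (h1.pow 2))).mul hw
  refine this.congr_deriv ?_
  simp only [Pi.mul_apply, Pi.add_apply, Pi.pow_apply, Pi.div_apply]
  have e : w2 = - (k:ℝ) * (cos θ / sin θ) * ω' θ - ℓ * ω θ - κ / (cos θ)^2 * ω θ
      + |ω θ| ^ (q-1) * ω θ := by linarith
  have hsc : sin θ ^ 2 + cos θ ^ 2 = 1 := sin_sq_add_cos_sq θ
  have e1 : (cos θ * cos θ - sin θ * -sin θ) / cos θ ^ 2 = 1 + (sin θ / cos θ)^2 := by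
    field_simp; ring
  have e2 : κ / cos θ ^ 2 = κ * (1 + (sin θ / cos θ)^2) := by
    field_simp; linear_combination -κ * hsc
  have e3 : (cos θ / sin θ) * (sin θ / cos θ) = 1 := by field_simp
  rw [e, e1, e2, ← hgκ]
  generalize |ω θ| ^ (q-1) = A
  generalize sin θ ^ k = W
  generalize sin θ / cos θ = t at *
  generalize cos θ / sin θ = R at *
  push_cast
  linear_combination (g * k * ω θ ^ 2 * W) * e3

/-- left end: the profile is bounded below and above near `0` -/
lemma aux_log (k : ℕ) (ω ω' E : ℝ → ℝ) (b c : ℝ) (hb : 0 < b) (hb2 : b < π/2) (hc : 0 < c)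
    (hd : ∀ t ∈ Set.Ioc 0 b, HasDerivAt ω (ω' t) t)
    (hco : ContinuousOn ω' (Set.Ioc 0 b))
    (hE : IntegrableOn E (Set.Ioc 0 b))
    (hEk : ∀ t ∈ Set.Ioc 0 b, (ω' t)^2 * sin t ^ k ≤ E t)
    (hF : ∀ t ∈ Set.Ioc 0 b, ω t * ω' t * sin t ^ k ≤ -c) :
    ∃ m M : ℝ, 0 < m ∧ 0 < M ∧ ∀ t ∈ Set.Ioc 0 b, m ≤ ω t ^ 2 ∧ ω t ^ 2 ≤ M := by
  have hspos : ∀ t ∈ Set.Ioc 0 b, 0 < sin t ^ k := fun t ht =>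
    pow_pos (sin_pos_of_pos_of_lt_pi ht.1 (by linarith [ht.2, pi_pos])) k
  have hneg : ∀ t ∈ Set.Ioc 0 b, ω t * ω' t < 0 := by
    intro t ht
    by_contra h
    push Not at h
    have := mul_nonneg h (hspos t ht).le
    linarith [hF t ht]
  have hne : ∀ t ∈ Set.Ioc 0 b, ω t ≠ 0 := by
    intro t ht h
    have := hneg t ht
    simp [h] at this
  have hE0 : ∀ t ∈ Set.Ioc 0 b, 0 ≤ E t := fun t ht =>
    le_trans (mul_nonneg (sq_nonneg _) (hspos t ht).le) (hEk t ht)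
  have key : ∀ t ∈ Set.Ioc 0 b, ∃ I : ℝ, 0 ≤ I ∧ I ≤ (2/c) * ∫ x in Set.Ioc 0 b, E x ∧
      I = log (ω t ^ 2) - log (ω b ^ 2) := by
    intro t ht
    have hsub : Set.Icc t b ⊆ Set.Ioc 0 b := fun x hx => ⟨lt_of_lt_of_le ht.1 hx.1, hx.2⟩
    have hder : ∀ x ∈ Set.uIcc t b, HasDerivAt (fun x => - log (ω x ^ 2))
        (-(2 * ω' x / ω x)) x := by
      intro x hx
      rw [Set.uIcc_of_le ht.2] at hx
      have hx' := hsub hx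
      have := (((hd x hx').pow 2).log (pow_ne_zero 2 (hne x hx'))).neg
      refine this.congr_deriv ?_
      have := hne x hx'
      simp only [Pi.pow_apply]
      push_cast
      field_simp
    have hcont : ContinuousOn (fun x => -(2 * ω' x / ω x)) (Set.Icc t b) := by
      refine ((continuousOn_const.mul (hco.mono hsub)).div ?_ (fun x hx => hne x (hsub hx))).neg
      exact fun x hx => (hd x (hsub hx)).continuousAt.continuousWithinAt
    have hint : IntervalIntegrable (fun x => -(2 * ω' x / ω x)) volume t b := by
      apply ContinuousOn.intervalIntegrable
      rwa [Set.uIcc_of_le ht.2]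
    have hftc := intervalIntegral.integral_eq_sub_of_hasDerivAt hder hint
    have hEt : IntegrableOn E (Set.Ioc t b) := hE.mono_set (Set.Ioc_subset_Ioc_left ht.1.le)
    have hEi : IntervalIntegrable E volume t b := by
      rwa [intervalIntegrable_iff_integrableOn_Ioc_of_le ht.2]
    have heq : ∀ x ∈ Set.Icc t b, -(2 * ω' x / ω x) = 2 * (ω' x)^2 / (-(ω x * ω' x)) := by
      intro x hx
      have h1 := hne x (hsub hx)
      have h2 : ω' x ≠ 0 := by
        intro h
        have := hneg x (hsub hx)
        simp [h] at this
      field_simp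
    refine ⟨∫ x in t..b, -(2 * ω' x / ω x), ?_, ?_, ?_⟩
    · apply intervalIntegral.integral_nonneg ht.2
      intro x hx
      rw [heq x hx]
      have := hneg x (hsub hx)
      apply div_nonneg (by positivity) (by linarith)
    · calc ∫ x in t..b, -(2 * ω' x / ω x) ≤ ∫ x in t..b, (2/c) * E x := by
            apply intervalIntegral.integral_mono_on ht.2 hint (hEi.const_mul _)
            intro x hx
            have h1 := hneg x (hsub hx)
            have h2 := hF x (hsub hx)
            have h3 := hEk x (hsub hx)
            rw [heq x hx, div_mul_eq_mul_div, div_le_div_iff₀ (by linarith) hc]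
            have h4 : 0 ≤ -(ω x * ω' x) := by linarith
            have h5 := mul_le_mul_of_nonneg_left h3 h4
            have h6 := mul_le_mul_of_nonneg_left h2 (sq_nonneg (ω' x))
            nlinarith
        _ = (2/c) * ∫ x in Set.Ioc t b, E x := by
            rw [intervalIntegral.integral_const_mul, intervalIntegral.integral_of_le ht.2]
        _ ≤ _ := by
            apply mul_le_mul_of_nonneg_left _ (by positivity)
            apply setIntegral_mono_set hE
            · exact (ae_restrict_mem measurableSet_Ioc).mono fun x hx => hE0 x hx
            · exact (Set.Ioc_subset_Ioc_left ht.1.le).eventuallyLE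
    · rw [hftc]; ring
  have hbb : b ∈ Set.Ioc 0 b := ⟨hb, le_rfl⟩
  have hωb : 0 < ω b ^ 2 := by have := hne b hbb; positivity
  refine ⟨ω b ^ 2, exp (log (ω b ^ 2) + (2/c) * ∫ x in Set.Ioc 0 b, E x), hωb, exp_pos _, ?_⟩
  intro t ht
  obtain ⟨I, h0, h1, h2⟩ := key t ht
  have hωt : 0 < ω t ^ 2 := by have := hne t ht; positivity
  constructor
  · exact (log_le_log_iff hωb hωt).1 (by linarith)
  · rw [← log_le_iff_le_exp hωt]; linarith

/-- one-dimensional trace: `v ^ 2` small everywhere if the `H¹` norm is small -/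
lemma aux_trace (v v' : ℝ → ℝ) (m b : ℝ) (hm : 0 < m) (hb : 0 < b) (hb1 : b < π/2)
    (hd : ∀ t ∈ Set.Ioo 0 (π/2), HasDerivAt v (v' t) t)
    (hco : ContinuousOn v' (Set.Ioo 0 (π/2)))
    (hI : IntegrableOn (fun θ => ((v' θ)^2 + (v θ)^2 / (cos θ)^2)) (Set.Ioo 0 (π/2)))
    (hsmall : ∫ θ in Set.Ioo 0 (π/2), ((v' θ)^2 + (v θ)^2 / (cos θ)^2) < m / 4)
    (hlow : ∀ t ∈ Set.Ioo 0 b, m ≤ v t ^ 2) : False := by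
  set E := fun θ => ((v' θ)^2 + (v θ)^2 / (cos θ)^2) with hEdef
  have hcos : ∀ t ∈ Set.Ioo 0 (π/2), 0 < cos t := fun t ht =>
    cos_pos_of_mem_Ioo ⟨by linarith [ht.1, pi_pos], ht.2⟩
  have hE1 : ∀ t ∈ Set.Ioo 0 (π/2), (v' t)^2 + (v t)^2 ≤ E t := by
    intro t ht
    have h1 := hcos t ht
    have h2 : (v t)^2 ≤ (v t)^2 / (cos t)^2 := by
      rw [le_div_iff₀ (by positivity)]
      have := cos_sq_le_one t
      nlinarith [sq_nonneg (v t)]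
    simp only [hEdef]; linarith
  have hE0 : ∀ t ∈ Set.Ioo 0 (π/2), 0 ≤ E t := fun t ht =>
    le_trans (by positivity) (hE1 t ht)
  -- the values at two points differ by little
  have hdiff : ∀ s ∈ Set.Ioo 0 (π/2), ∀ t ∈ Set.Ioo 0 (π/2), s ≤ t →
      v s ^ 2 - v t ^ 2 ≤ m / 4 := by
    intro s hs t ht hst
    have hsub : Set.Icc s t ⊆ Set.Ioo 0 (π/2) :=
      fun x hx => ⟨lt_of_lt_of_le hs.1 hx.1, lt_of_le_of_lt hx.2 ht.2⟩
    have hder : ∀ x ∈ Set.uIcc s t, HasDerivAt (fun x => -(v x ^ 2)) (-(2 * v x * v' x)) x := by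
      intro x hx
      rw [Set.uIcc_of_le hst] at hx
      refine ((hd x (hsub hx)).pow 2).neg.congr_deriv ?_
      push_cast
      ring
    have hint : IntervalIntegrable (fun x => -(2 * v x * v' x)) volume s t := by
      apply ContinuousOn.intervalIntegrable
      rw [Set.uIcc_of_le hst]
      refine ((continuousOn_const.mul ?_).mul (hco.mono hsub)).neg
      exact fun x hx => (hd x (hsub hx)).continuousAt.continuousWithinAt
    have hftc := intervalIntegral.integral_eq_sub_of_hasDerivAt hder hint
    have hsub' : Set.Ioc s t ⊆ Set.Ioo 0 (π/2) := Set.Ioc_subset_Icc_self.trans hsub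
    have hEi : IntervalIntegrable E volume s t := by
      rw [intervalIntegrable_iff_integrableOn_Ioc_of_le hst]
      exact hI.mono_set hsub'
    have h1 : ∫ x in s..t, -(2 * v x * v' x) ≤ ∫ x in s..t, E x := by
      apply intervalIntegral.integral_mono_on hst hint hEi
      intro x hx
      have := hE1 x (hsub hx)
      nlinarith [sq_nonneg (v x + v' x)]
    have h2 : ∫ x in s..t, E x ≤ ∫ x in Set.Ioo 0 (π/2), E x := by
      rw [intervalIntegral.integral_of_le hst]
      apply setIntegral_mono_set hI
      · exact (ae_restrict_mem measurableSet_Ioo).mono fun x hx => hE0 x hx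
      · exact hsub'.eventuallyLE
    linarith
  have hall : ∀ t ∈ Set.Ioo 0 (π/2), 3 * m / 4 ≤ E t := by
    intro t ht
    have h1 : min t (b/2) ∈ Set.Ioo 0 (π/2) := ⟨lt_min ht.1 (by linarith), lt_of_le_of_lt (min_le_left _ _) ht.2⟩
    have h2 := hdiff _ h1 t ht (min_le_left _ _)
    have h3 := hlow (min t (b/2)) ⟨h1.1, lt_of_le_of_lt (min_le_right _ _) (by linarith)⟩
    have := hE1 t ht
    nlinarith [sq_nonneg (v' t)]
  have h1 : ∫ x in Set.Ioo 0 (π/2), (3 * m / 4) ≤ ∫ x in Set.Ioo 0 (π/2), E x := by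
    apply setIntegral_mono_on _ hI measurableSet_Ioo hall
    simp
  rw [setIntegral_const] at h1
  simp only [Measure.real, Real.volume_Ioo, smul_eq_mul, sub_zero] at h1
  rw [ENNReal.toReal_ofReal (by positivity)] at h1
  have := pi_gt_three
  nlinarith

lemma aux_cs_integrable (u : ℝ → ℝ) (hu : ContDiff ℝ (⊤ : ℕ∞) u) (hc : HasCompactSupport u)
    (hs : tsupport u ⊆ Set.Ioo 0 (π/2)) :
    IntegrableOn (fun θ => ((deriv u θ)^2 + (u θ)^2 / (cos θ)^2)) (Set.Ioo 0 (π/2)) := by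
  have hK : IsCompact (tsupport u) := hc
  have hdc : Continuous (deriv u) := hu.continuous_deriv (by simp)
  have h1 : IntegrableOn (fun θ => ((deriv u θ)^2 + (u θ)^2 / (cos θ)^2)) (tsupport u) := by
    apply ContinuousOn.integrableOn_compact hK
    refine ((hdc.continuousOn).pow 2).add ((hu.continuous.continuousOn.pow 2).div (by fun_prop) ?_)
    intro x hx
    have hx := hs hx
    have : 0 < cos x := cos_pos_of_mem_Ioo ⟨by linarith [hx.1, pi_pos], by linarith [hx.2]⟩
    positivity
  rw [integrableOn_iff_integrable_of_support_subset] at h1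
  · exact h1.integrableOn
  · intro x hx
    by_contra h
    apply hx
    have h2 : u x = 0 := image_eq_zero_of_notMem_tsupport h
    have h3 : deriv u x = 0 := by
      have := mt (fun h' => support_deriv_subset (f := u) (Function.mem_support.2 h')) h
      simpa using this
    simp [h2, h3]

set_option maxHeartbeats 1600000 in
theorem supercritical_nonexistence (N : ℕ) (hN : 2 ≤ N) (κ : ℝ)
    (hκ0 : 0 < κ) (hκ4 : κ ≤ 1/4) (α : ℝ) (hα : α = 1 + Real.sqrt (1 - 4*κ))
    (q : ℝ) (hq : (2*(N : ℝ) + α) / (2*(N : ℝ) - 4 + α) ≤ q)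
    (ℓ : ℝ) (hℓ : ℓ = (2/(q-1)) * (2*q/(q-1) - (N : ℝ)))
    (ω : ℝ → ℝ) (hω : ContDiffOn ℝ 2 ω (Set.Ioo 0 (π/2)))
    (hODE : ∀ θ ∈ Set.Ioo 0 (π/2),
      -(deriv (deriv ω) θ) - ((N : ℝ) - 2) * (Real.cos θ / Real.sin θ) * deriv ω θ
        - ℓ * ω θ - κ / (Real.cos θ)^2 * ω θ + |ω θ| ^ (q-1) * ω θ = 0)
    (hEnergy : MeasureTheory.IntegrableOn
      (fun θ => ((deriv ω θ)^2 + (ω θ)^2 / (Real.cos θ)^2 + |ω θ| ^ (q+1))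
        * (Real.sin θ)^(N-2))
      (Set.Ioo 0 (π/2)) volume)
    (hApprox : ∃ ωn : ℕ → ℝ → ℝ,
      (∀ m : ℕ, ContDiff ℝ (⊤ : ℕ∞) (ωn m) ∧ HasCompactSupport (ωn m) ∧
        tsupport (ωn m) ⊆ Set.Ioo 0 (π/2)) ∧
      Tendsto (fun m : ℕ =>
          ∫ θ in Set.Ioo 0 (π/2),
            ((deriv (fun t => ω t - ωn m t) θ)^2
              + (ω θ - ωn m θ)^2 / (Real.cos θ)^2) * (Real.sin θ)^(N-2))
        atTop (nhds 0)) :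
    ∀ θ ∈ Set.Ioo 0 (π/2), ω θ = 0 := by
  obtain ⟨hg1, hg2, hgκ⟩ := aux_gamma κ α hκ0 hκ4 hα
  obtain ⟨g, rfl⟩ : ∃ g, α = 2 * g := ⟨α/2, by ring⟩
  rw [mul_div_cancel_left₀ _ (two_ne_zero)] at hg1 hg2 hgκ
  obtain ⟨hq1, hℓle⟩ := aux_ell N hN g q ℓ hg1 hq hℓ
  obtain ⟨k, rfl⟩ : ∃ k, N = k + 2 := ⟨N - 2, by omega⟩
  have hk : ((k + 2 : ℕ) : ℝ) - 2 = k := by push_cast; ring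
  rw [hk] at hℓle
  simp only [hk] at hODE
  simp only [Nat.add_sub_cancel] at hEnergy hApprox
  have hcos : ∀ t ∈ Set.Ioo 0 (π/2), 0 < cos t := fun t ht =>
    cos_pos_of_mem_Ioo ⟨by linarith [ht.1, pi_pos], ht.2⟩
  have hsin : ∀ t ∈ Set.Ioo 0 (π/2), 0 < sin t := fun t ht =>
    sin_pos_of_pos_of_lt_pi ht.1 (by linarith [ht.2, pi_pos])
  have hω1 : ContDiffOn ℝ 1 (deriv ω) (Set.Ioo 0 (π/2)) :=
    hω.deriv_of_isOpen isOpen_Ioo (by norm_num)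
  have hd1 : ∀ t ∈ Set.Ioo 0 (π/2), HasDerivAt ω (deriv ω t) t := fun t ht =>
    ((hω.differentiableOn (by norm_num)).differentiableAt (isOpen_Ioo.mem_nhds ht)).hasDerivAt
  have hd2 : ∀ t ∈ Set.Ioo 0 (π/2), HasDerivAt (deriv ω) (deriv (deriv ω) t) t := fun t ht =>
    ((hω1.differentiableOn (by norm_num)).differentiableAt (isOpen_Ioo.mem_nhds ht)).hasDerivAt
  -- reduced energy
  set E := fun θ => ((deriv ω θ)^2 + (ω θ)^2 / (cos θ)^2) * sin θ ^ k with hEdef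
  have hE : IntegrableOn E (Set.Ioo 0 (π/2)) := by
    refine Integrable.mono' hEnergy
      ((aux_measurable k ω (deriv ω) (π/2) le_rfl hω.continuousOn
        hω1.continuousOn).aestronglyMeasurable measurableSet_Ioo) ?_
    refine (ae_restrict_mem measurableSet_Ioo).mono fun t ht => ?_
    have h1 := pow_pos (hsin t ht) k
    rw [Real.norm_of_nonneg (by positivity)]
    apply mul_le_mul_of_nonneg_right _ h1.le
    have : 0 ≤ |ω t| ^ (q+1) := by positivity
    linarith
  set F := fun t => (ω t * deriv ω t + g * (sin t / cos t) * ω t ^ 2) * sin t ^ k with hFdef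
  set D := fun θ => (((deriv ω θ + g * (sin θ / cos θ) * ω θ)^2 + (g * (g + k) - ℓ) * ω θ ^ 2
        + |ω θ| ^ (q-1) * ω θ ^ 2) * sin θ ^ k) with hDdef
  have hFD : ∀ t ∈ Set.Ioo 0 (π/2), HasDerivAt F (D t) t := fun t ht =>
    aux_deriv k g κ ℓ q hgκ ω (deriv ω) (deriv (deriv ω) t) t ht (hd1 t ht) (hd2 t ht) (hODE t ht)
  have hD0 : ∀ t ∈ Set.Ioo 0 (π/2), 0 ≤ D t := by
    intro t ht
    have h1 := pow_pos (hsin t ht) k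
    have h2 : 0 ≤ (g * (g + k) - ℓ) := by linarith
    simp only [hDdef]
    positivity
  have hmono : MonotoneOn F (Set.Ioo 0 (π/2)) := by
    apply monotoneOn_of_deriv_nonneg (convex_Ioo _ _)
    · exact fun t ht => (hFD t ht).continuousAt.continuousWithinAt
    · rw [interior_Ioo]
      exact fun t ht => (hFD t ht).differentiableAt.differentiableWithinAt
    · rw [interior_Ioo]
      intro t ht
      rw [(hFD t ht).deriv]
      exact hD0 t ht
  -- F ≤ 0
  have hFle : ∀ t ∈ Set.Ioo 0 (π/2), F t ≤ 0 := by
    intro a ha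
    by_contra hpos
    push Not at hpos
    have hsub : Set.Ioo a (π/2) ⊆ Set.Ioo 0 (π/2) := Set.Ioo_subset_Ioo_left ha.1.le
    refine aux_right E a (π/2) (F a / 2) ha.2 (by linarith) (hE.mono_set hsub) ?_
    intro t ht
    have ht' := hsub ht
    have h1 := hmono ha ht' ht.1.le
    have hc := hcos t ht'
    have hs := pow_pos (hsin t ht') k
    have hcle : cos t ≤ π/2 - t := by
      rw [← sin_pi_div_two_sub]
      exact sin_le (by linarith [ht.2])
    have h2 : F t ≤ 2 * cos t * E t := by
      have h3 : ω t * deriv ω t + g * (sin t / cos t) * ω t ^ 2 ≤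
          2 * cos t * ((deriv ω t)^2 + (ω t)^2 / (cos t)^2) := by
        set z := ω t / cos t with hz
        have hωz : ω t = z * cos t := by rw [hz]; field_simp
        have e1 : g * (sin t / cos t) * ω t ^ 2 = cos t * ((g * sin t) * z^2) := by
          rw [hz]; field_simp
        have e2 : (ω t)^2 / (cos t)^2 = z^2 := by rw [hz]; field_simp
        rw [e1, e2]
        have e3 : g * sin t ≤ 1 := by
          have := sin_le_one t
          have := hsin t ht'
          nlinarith
        have e4 : (g * sin t) * z^2 ≤ z^2 := by nlinarith [sq_nonneg z]
        have e5 : z * deriv ω t + (g * sin t) * z^2 ≤ 2 * ((deriv ω t)^2 + z^2) := by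
          nlinarith [sq_nonneg (z - deriv ω t), sq_nonneg z, sq_nonneg (deriv ω t)]
        have := mul_le_mul_of_nonneg_left e5 hc.le
        rw [hωz]; linarith
      have := mul_le_mul_of_nonneg_right h3 hs.le
      simp only [hFdef, hEdef]; linarith
    have hE0 : 0 ≤ E t := by simp only [hEdef]; positivity
    rw [div_le_iff₀ (by linarith [ht.2])]
    nlinarith
  have hFge : ∀ t ∈ Set.Ioo 0 (π/2), 0 ≤ F t := by
    intro b hb
    by_contra hneg
    push Not at hneg
    have hsub : Set.Ioc 0 b ⊆ Set.Ioo 0 (π/2) := fun x hx => ⟨hx.1, lt_of_le_of_lt hx.2 hb.2⟩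
    have hEk : ∀ t ∈ Set.Ioc 0 b, (deriv ω t)^2 * sin t ^ k ≤ E t := by
      intro t ht
      have hs := pow_pos (hsin t (hsub ht)) k
      simp only [hEdef]
      apply mul_le_mul_of_nonneg_right _ hs.le
      have : 0 ≤ (ω t)^2 / (cos t)^2 := by positivity
      linarith
    have hB : ∀ t ∈ Set.Ioc 0 b, ω t * deriv ω t * sin t ^ k ≤ -(-F b) := by
      intro t ht
      have h1 := hmono (hsub ht) hb ht.2
      have hs := hsin t (hsub ht)
      have hs := pow_pos (hsin t (hsub ht)) k
      have hc := hcos t (hsub ht)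
      have : 0 ≤ g * (sin t / cos t) * ω t ^ 2 * sin t ^ k := by
        have : 0 ≤ g := by linarith
        positivity
      have h2 : F t = ω t * deriv ω t * sin t ^ k + g * (sin t / cos t) * ω t ^ 2 * sin t ^ k := by
        simp only [hFdef]; ring
      linarith
    obtain ⟨m, M, hm, hM, hmM⟩ := aux_log k ω (deriv ω) E b (-F b) hb.1 hb.2 (by linarith)
      (fun t ht => hd1 t (hsub ht)) (hω1.continuousOn.mono hsub) (hE.mono_set hsub) hEk hB
    rcases Nat.eq_zero_or_pos k with hk0 | hk0
    · subst hk0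
      obtain ⟨ωn, hn, hlim⟩ := hApprox
      simp only [pow_zero, mul_one] at hlim hEdef
      obtain ⟨n, hnlt⟩ := (hlim.eventually (gt_mem_nhds (show (0:ℝ) < m/4 by linarith))).exists
      obtain ⟨hu, huc, hus⟩ := hn n
      have hud : ∀ t, HasDerivAt (ωn n) (deriv (ωn n) t) t := fun t =>
        (hu.differentiable (by simp) t).hasDerivAt
      have hdc : Continuous (deriv (ωn n)) := hu.continuous_deriv (by simp)
      have hvd : ∀ t ∈ Set.Ioo 0 (π/2), HasDerivAt (fun t => ω t - ωn n t)
          (deriv (fun t => ω t - ωn n t) t) t := fun t ht =>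
        ((hd1 t ht).sub (hud t)).differentiableAt.hasDerivAt
      have hveq : ∀ t ∈ Set.Ioo 0 (π/2), deriv (fun t => ω t - ωn n t) t
          = deriv ω t - deriv (ωn n) t := fun t ht => ((hd1 t ht).sub (hud t)).deriv
      have hvc : ContinuousOn (deriv (fun t => ω t - ωn n t)) (Set.Ioo 0 (π/2)) :=
        (hω1.continuousOn.sub hdc.continuousOn).congr hveq
      have hvI : IntegrableOn (fun θ => ((deriv (fun t => ω t - ωn n t) θ)^2
          + (ω θ - ωn n θ)^2 / (cos θ)^2)) (Set.Ioo 0 (π/2)) := by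
        have hdom := (hE.add (aux_cs_integrable (ωn n) hu huc hus)).const_mul 2
        have hmeas := (aux_measurable 0 (fun t => ω t - ωn n t) _ (π/2) le_rfl
          (hω.continuousOn.sub hu.continuous.continuousOn) hvc).aestronglyMeasurable
            (μ := volume) measurableSet_Ioo
        simp only [pow_zero, mul_one] at hmeas
        refine Integrable.mono' hdom hmeas ?_
        refine (ae_restrict_mem measurableSet_Ioo).mono fun t ht => ?_
        rw [Real.norm_of_nonneg (by positivity), hveq t ht]
        simp only [Pi.add_apply, hEdef]
        have hc := hcos t ht
        rw [show ∀ x y z w c : ℝ, 2 * (x + y / c + (z + w / c)) = 2 * (x + z) + 2 * (y + w) / c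
          from fun x y z w c => by ring]
        apply add_le_add
        · nlinarith [sq_nonneg (deriv ω t + deriv (ωn n) t)]
        · apply div_le_div_of_nonneg_right _ (by positivity)
          nlinarith [sq_nonneg (ω t + ωn n t)]
      -- `ωn n` vanishes near zero
      have h0 : (0:ℝ) ∈ (tsupport (ωn n))ᶜ := fun h => lt_irrefl _ (hus h).1
      obtain ⟨δ, hδ, hball⟩ := Metric.isOpen_iff.1 (isClosed_tsupport (ωn n)).isOpen_compl 0 h0
      refine aux_trace _ _ m (min b δ) hm (lt_min hb.1 hδ) (lt_of_le_of_lt (min_le_left _ _) hb.2)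
        hvd hvc hvI hnlt ?_
      intro t ht
      have h1 : ωn n t = 0 := by
        apply image_eq_zero_of_notMem_tsupport
        apply hball
        rw [Metric.mem_ball, dist_zero_right, Real.norm_eq_abs, abs_of_pos ht.1]
        exact lt_of_lt_of_le ht.2 (min_le_right _ _)
      simp only [h1, sub_zero]
      exact (hmM t ⟨ht.1, ht.2.le.trans (min_le_left _ _)⟩).1
    · refine aux_left E b ((F b)^2 / M) hb.1 (by have := hneg.ne; positivity)
        (hE.mono_set (Set.Ioo_subset_Ioc_self.trans hsub)) ?_
      intro t ht
      have ht1 : t ∈ Set.Ioc 0 b := ⟨ht.1, ht.2.le⟩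
      have hs := hsin t (hsub ht1)
      have hsk := pow_pos hs k
      have hst : sin t ^ k ≤ t := by
        calc sin t ^ k ≤ sin t ^ 1 := pow_le_pow_of_le_one hs.le (sin_le_one t) hk0
          _ = sin t := pow_one _
          _ ≤ t := sin_le ht.1.le
      refine le_trans ?_ (hEk t ht1)
      have h1 := hB t ht1
      have h2 := (hmM t ht1).2
      have ht0 : 0 < t := ht.1
      rw [div_div, div_le_iff₀ (by positivity)]
      have h3 : (F b)^2 ≤ (ω t * deriv ω t * sin t ^ k)^2 := by
        rw [sq_le_sq, abs_of_neg hneg, abs_of_neg (by linarith)]; linarith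
      refine h3.trans ?_
      have h4 : ω t ^ 2 * sin t ^ k ≤ M * t := mul_le_mul h2 hst hsk.le hM.le
      have h5 := mul_le_mul_of_nonneg_left h4
        (show 0 ≤ deriv ω t ^ 2 * sin t ^ k by positivity)
      refine le_trans (le_of_eq ?_) h5
      ring
  -- conclusion
  intro θ hθ
  have hF0 : F =ᶠ[nhds θ] fun _ => 0 := by
    filter_upwards [isOpen_Ioo.mem_nhds hθ] with t ht
    exact le_antisymm (hFle t ht) (hFge t ht)
  have hDθ : D θ = 0 := by
    rw [← (hFD θ hθ).deriv, hF0.deriv_eq]; simp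
  by_contra hne
  have hs := pow_pos (hsin θ hθ) k
  have h2 : 0 ≤ (g * (g + k) - ℓ) := by linarith
  have h3 : 0 < |ω θ| ^ (q-1) := by
    have := abs_pos.2 hne
    positivity
  have h4 : 0 < ω θ ^ 2 := by positivity
  have : 0 < D θ := by
    simp only [hDdef]
    positivity
  linarith
end
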